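/- For m ≤ 3, the orthogonal group O(m,3) is generated by the set M_m of invertible m×m monomial matrices over F_3. For m ≥ 4, O(m,3) is generated by M_m together with the block diagonal matrix diag(H_4, I_{m−4}), where H_4 = H_2 ⊗ H_2 and H_2 is the 2×2 matrix with rows (1,1) and (1,−1) over F_3. -/

import Mathlib

open Matrix

/-- A monomial matrix: `A = P D` for a permutation matrix `P` and an invertible diagonal
matrix `D`; equivalently `A i j = d j` if `i = p j` (and `0` otherwise) for a permutation
`p` and nonzero scalars `d j`. -/
def IsMonomial {m : ℕ} (A : Matrix (Fin m) (Fin m) (ZMod 3)) : Prop :=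
  ∃ (p : Equiv.Perm (Fin m)) (d : Fin m → ZMod 3),
    (∀ i, d i ≠ 0) ∧ ∀ i j, A i j = if i = p j then d j else 0

/-- The orthogonal group `O(m, 3)`: invertible matrices `A` over `F_3` with `AᵀA = I`,
as a subgroup of `GL(m, 3)`. -/
def OGL (m : ℕ) : Subgroup (GL (Fin m) (ZMod 3)) where
  carrier := { A | (A : Matrix (Fin m) (Fin m) (ZMod 3))ᵀ * (A : Matrix (Fin m) (Fin m) (ZMod 3)) = 1 }
  one_mem' := by simp
  mul_mem' := by
    intro a b ha hb
    simp only [Set.mem_setOf_eq] at *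
    rw [Units.val_mul, Matrix.transpose_mul, Matrix.mul_assoc,
      ← Matrix.mul_assoc ((a : Matrix (Fin m) (Fin m) (ZMod 3)))ᵀ, ha, Matrix.one_mul, hb]
  inv_mem' := by
    intro a ha
    simp only [Set.mem_setOf_eq] at *
    have h1 : ((a⁻¹ : GL (Fin m) (ZMod 3)) : Matrix (Fin m) (Fin m) (ZMod 3))
        = (a : Matrix (Fin m) (Fin m) (ZMod 3))ᵀ := by
      calc ((a⁻¹ : GL (Fin m) (ZMod 3)) : Matrix (Fin m) (Fin m) (ZMod 3))
          = 1 * ((a⁻¹ : GL (Fin m) (ZMod 3)) : Matrix (Fin m) (Fin m) (ZMod 3)) :=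
            (Matrix.one_mul _).symm
        _ = ((a : Matrix (Fin m) (Fin m) (ZMod 3))ᵀ * (a : Matrix (Fin m) (Fin m) (ZMod 3))) *
              ((a⁻¹ : GL (Fin m) (ZMod 3)) : Matrix (Fin m) (Fin m) (ZMod 3)) := by rw [ha]
        _ = (a : Matrix (Fin m) (Fin m) (ZMod 3))ᵀ *
              ((a : Matrix (Fin m) (Fin m) (ZMod 3)) *
                ((a⁻¹ : GL (Fin m) (ZMod 3)) : Matrix (Fin m) (Fin m) (ZMod 3))) := by
            rw [Matrix.mul_assoc]
        _ = (a : Matrix (Fin m) (Fin m) (ZMod 3))ᵀ := by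
            rw [show ((a : Matrix (Fin m) (Fin m) (ZMod 3)) *
              ((a⁻¹ : GL (Fin m) (ZMod 3)) : Matrix (Fin m) (Fin m) (ZMod 3))) = 1 from a.mul_inv,
              Matrix.mul_one]
    rw [h1, Matrix.transpose_transpose, ← h1, a.mul_inv]

/-- The 2×2 matrix with rows `(1, 1)` and `(1, −1)`, over `F_3`. -/
def H2 : Matrix (Fin 2) (Fin 2) (ZMod 3) := !![1, 1; 1, -1]

open Kronecker in
/-- `H_4 = H_2 ⊗ H_2` (Kronecker product), over `F_3`. -/
def H4 : Matrix (Fin 4) (Fin 4) (ZMod 3) :=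
  Matrix.reindex finProdFinEquiv finProdFinEquiv (H2 ⊗ₖ H2)

/-- The block-diagonal matrix `diag(H_4, I_{m−4})`. -/
def diagH4 (m : ℕ) : Matrix (Fin m) (Fin m) (ZMod 3) :=
  Matrix.of fun i j =>
    if h : (i : ℕ) < 4 ∧ (j : ℕ) < 4 then H4 ⟨i, h.1⟩ ⟨j, h.2⟩
    else if (i : ℕ) = (j : ℕ) then 1 else 0

/-!
Over `F_3` a nonzero scalar squares to `1`, so `v ⬝ᵥ v` is the number of nonzero entries of `v`
modulo `3`, and a unit vector has `1` nonzero entry or at least `4`. In the second case the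
reflection in a suitable vector with four nonzero entries, all in the support of `v`, makes the
support smaller. Hence monomial matrices and these reflections carry every unit vector to a basis
vector, and they do so without moving the basis vectors already fixed: they generate the orthogonal
group. For `m ≤ 3` there are no such reflections. For `m ≥ 4` they are all conjugate under
monomial matrices, and `diag(H_4, I)` is one of them times a monomial matrix.
-/

namespace OrthogonalGeneration

attribute [local instance] starRingOfComm

section CommRing

variable {ι R : Type*} [Fintype ι] [DecidableEq ι] [CommRing R]

/-- The orthogonal matrix `P D` with `P` the permutation matrix of `σ` and `D` the diagonal matrix
with entries `d j`, which must square to `1` for `P D` to be orthogonal. -/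
def signedPerm (σ : Equiv.Perm ι) (d : ι → R) (hd : ∀ i, d i * d i = 1) : orthogonalGroup ι R :=
  ⟨of fun i j => if i = σ j then d j else 0, (mem_orthogonalGroup_iff' ι R).2 <| by
    ext i j
    obtain rfl | hij := eq_or_ne i j
    · simp [mul_apply, hd]
    · simp [mul_apply, one_apply, hij, hij.symm]⟩

theorem coe_signedPerm_apply (σ : Equiv.Perm ι) (d : ι → R) (hd : ∀ i, d i * d i = 1) (i j : ι) :
    (signedPerm σ d hd).1 i j = if i = σ j then d j else 0 :=
  rfl

theorem signedPerm_mulVec_apply (σ : Equiv.Perm ι) (d : ι → R) (hd : ∀ i, d i * d i = 1)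
    (v : ι → R) (i : ι) : ((signedPerm σ d hd).1 *ᵥ v) (σ i) = d i * v i := by
  simp [mulVec, dotProduct, coe_signedPerm_apply]

theorem signedPerm_mulVec_single (σ : Equiv.Perm ι) (d : ι → R) (hd : ∀ i, d i * d i = 1)
    (j : ι) (c : R) :
    (signedPerm σ d hd).1 *ᵥ Pi.single j c = Pi.single (σ j) (d j * c) := by
  ext i
  obtain ⟨i, rfl⟩ := σ.surjective i
  by_cases hij : i = j <;> simp [signedPerm_mulVec_apply, hij]

/-- The reflection `v ↦ v - 2 (u ⬝ᵥ v) u` in the hyperplane orthogonal to a vector `u` of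
norm `1`. -/
def reflection (u : ι → R) (hu : u ⬝ᵥ u = 1) : orthogonalGroup ι R :=
  ⟨1 - (2 : R) • vecMulVec u u, (mem_orthogonalGroup_iff' ι R).2 <| by
    simp only [transpose_sub, transpose_one, transpose_smul, transpose_vecMulVec, sub_mul, mul_sub,
      one_mul, mul_one, smul_mul_assoc, mul_smul_comm, vecMulVec_mul_vecMulVec, hu, one_smul]
    module⟩

theorem coe_reflection (u : ι → R) (hu : u ⬝ᵥ u = 1) :
    (reflection u hu).1 = 1 - (2 : R) • vecMulVec u u :=
  rfl

theorem reflection_mulVec (u : ι → R) (hu : u ⬝ᵥ u = 1) (v : ι → R) :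
    (reflection u hu).1 *ᵥ v = v - (2 * (u ⬝ᵥ v)) • u := by
  ext i
  simp only [coe_reflection, sub_mulVec, one_mulVec, smul_mulVec, vecMulVec_mulVec, Pi.sub_apply,
    Pi.smul_apply, smul_eq_mul, MulOpposite.smul_eq_mul_unop, MulOpposite.unop_op]
  ring

theorem reflection_mulVec_of_dotProduct_eq_zero {u v : ι → R} (hu : u ⬝ᵥ u = 1)
    (huv : u ⬝ᵥ v = 0) : (reflection u hu).1 *ᵥ v = v := by
  simp [reflection_mulVec, huv]

theorem dotProduct_mulVec_mulVec (A : orthogonalGroup ι R) (v w : ι → R) :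
    (A.1 *ᵥ v) ⬝ᵥ (A.1 *ᵥ w) = v ⬝ᵥ w := by
  rw [dotProduct_mulVec, vecMul_mulVec, (mem_orthogonalGroup_iff' ι R).1 A.2, vecMul_one]

theorem reflection_mulVec_eq_conj (A : orthogonalGroup ι R) {u : ι → R} (hu : u ⬝ᵥ u = 1)
    (hAu : (A.1 *ᵥ u) ⬝ᵥ (A.1 *ᵥ u) = 1) :
    reflection (A.1 *ᵥ u) hAu = A * reflection u hu * A⁻¹ := by
  rw [eq_mul_inv_iff_mul_eq]
  apply Subtype.ext
  simp only [UnitaryGroup.mul_val, coe_reflection, sub_mul, mul_sub, one_mul, mul_one,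
    smul_mul_assoc, mul_smul_comm, mul_vecMulVec, vecMulVec_mul, vecMul_mulVec,
    (mem_orthogonalGroup_iff' ι R).1 A.2, vecMul_one]

theorem subgroup_eq_top_of_forall_unit_vector (G : Subgroup (orthogonalGroup ι R))
    (hG : ∀ v : ι → R, v ⬝ᵥ v = 1 → ∀ k, ∃ g ∈ G, g.1 *ᵥ v = Pi.single k 1 ∧
      ∀ j ≠ k, v j = 0 → g.1 *ᵥ Pi.single j 1 = Pi.single j 1) :
    G = ⊤ := by
  rw [eq_top_iff]
  intro A _
  have fixes (s : Finset ι) :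
      ∃ g ∈ G, ∀ j ∈ s, (g * A).1 *ᵥ Pi.single j 1 = Pi.single j 1 := by
    induction s using Finset.induction_on with
    | empty => exact ⟨1, G.one_mem, by simp⟩
    | insert k s hk ih =>
      obtain ⟨g, hg, hgA⟩ := ih
      set v := (g * A).1 *ᵥ Pi.single k 1
      have v_unit : v ⬝ᵥ v = 1 := (dotProduct_mulVec_mulVec _ _ _).trans (by simp)
      have v_apply (j : ι) (hj : j ∈ s) : v j = 0 := by
        have := dotProduct_mulVec_mulVec (g * A) (Pi.single j 1) (Pi.single k 1)
        rw [hgA j hj] at this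
        simpa [v, ne_of_mem_of_not_mem hj hk] using this
      obtain ⟨c, hc, hcv, hcs⟩ := hG v v_unit k
      refine ⟨c * g, G.mul_mem hc hg, fun j hj => ?_⟩
      rw [mul_assoc, UnitaryGroup.mul_val, ← mulVec_mulVec]
      obtain rfl | hj := Finset.mem_insert.1 hj
      · exact hcv
      · rw [hgA j hj, hcs j (ne_of_mem_of_not_mem hj hk) (v_apply j hj)]
  obtain ⟨g, hg, hgA⟩ := fixes Finset.univ
  have gA_eq_one : g * A = 1 :=
    Subtype.ext <| ext_of_mulVec_single fun j => by
      rw [hgA j (Finset.mem_univ j), UnitaryGroup.one_val, one_mulVec]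
  rw [eq_inv_of_mul_eq_one_right gA_eq_one]
  exact G.inv_mem hg

end CommRing

section ZModThree

variable {ι : Type*} [Fintype ι]

theorem mul_self_eq_one_iff_ne_zero {c : ZMod 3} : c * c = 1 ↔ c ≠ 0 := by
  decide +revert

theorem dotProduct_self_eq_hammingNorm (v : ι → ZMod 3) : v ⬝ᵥ v = (hammingNorm v : ZMod 3) := by
  have mul_self_eq (c : ZMod 3) : c * c = if c ≠ 0 then 1 else 0 := by decide +revert
  simp only [dotProduct, mul_self_eq, Finset.sum_boole, hammingNorm]

theorem hammingNorm_eq_one_or_four_le {v : ι → ZMod 3} (hv : v ⬝ᵥ v = 1) :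
    hammingNorm v = 1 ∨ 4 ≤ hammingNorm v := by
  rw [dotProduct_self_eq_hammingNorm] at hv
  by_contra! h
  have : hammingNorm v < 4 := h.2
  interval_cases hammingNorm v <;> revert h hv <;> decide

theorem exists_hammingNorm_eq_four_of_four_le {v : ι → ZMod 3} (hv : 4 ≤ hammingNorm v) :
    ∃ u : ι → ZMod 3, hammingNorm u = 4 ∧ (∀ i, v i = 0 → u i = 0) ∧ u ⬝ᵥ v = -1 ∧
      ∃ b, v b ≠ 0 ∧ u b = v b := by
  classical
  obtain ⟨t, ht, t_card⟩ := Finset.exists_subset_card_eq hv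
  have v_ne (i : ι) (hi : i ∈ t) : v i ≠ 0 := by simpa using ht hi
  obtain ⟨a, ha, b, hb, hab⟩ := Finset.one_lt_card.1 (show 1 < t.card by lia)
  -- `u` is `v` restricted to `t`, with the sign at `a` flipped: `v a + v a = -v a`.
  let u : ι → ZMod 3 := t.piecewise v 0 + Pi.single a (v a)
  have u_ne_iff (i : ι) : u i ≠ 0 ↔ i ∈ t := by
    have add_self_ne_zero (c : ZMod 3) : c ≠ 0 → c + c ≠ 0 := by decide +revert
    by_cases hi : i ∈ t
    · by_cases hia : i = a
      · subst hia
        simpa [u, hi] using add_self_ne_zero _ (v_ne i hi)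
      · simpa [u, hi, hia] using v_ne i hi
    · simp [u, hi, ne_of_mem_of_not_mem ha hi]
  refine ⟨u, ?_, fun i hi => ?_, ?_, b, v_ne b hb, ?_⟩
  · simp [hammingNorm, u_ne_iff, t_card]
  · by_contra hui
    exact v_ne i ((u_ne_iff i).1 hui) hi
  · have restrict_mul (i : ι) : t.piecewise v 0 i * v i = if i ∈ t then 1 else 0 := by
      by_cases hi : i ∈ t
      · simp [hi, mul_self_eq_one_iff_ne_zero.2 (v_ne i hi)]
      · simp [hi]
    have restrict_dot : t.piecewise v 0 ⬝ᵥ v = 4 := by simp [dotProduct, restrict_mul, t_card]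
    rw [add_dotProduct, restrict_dot, single_dotProduct,
      mul_self_eq_one_iff_ne_zero.2 (v_ne a ha)]
    decide
  · simp [u, hb, hab.symm]

variable [DecidableEq ι]

theorem reflection_mulVec_of_dotProduct_eq_neg_one {u v : ι → ZMod 3} (hu : u ⬝ᵥ u = 1)
    (huv : u ⬝ᵥ v = -1) : (reflection u hu).1 *ᵥ v = v - u := by
  rw [reflection_mulVec, huv, show (2 * -1 : ZMod 3) = 1 by decide, one_smul]

theorem exists_reflection_hammingNorm_mulVec_lt {v : ι → ZMod 3} (hv : 4 ≤ hammingNorm v) :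
    ∃ (u : ι → ZMod 3) (hu : u ⬝ᵥ u = 1), hammingNorm u = 4 ∧ (∀ i, v i = 0 → u i = 0) ∧
      hammingNorm ((reflection u hu).1 *ᵥ v) < hammingNorm v := by
  obtain ⟨u, u_norm, u_supp, huv, b, hvb, hub⟩ := exists_hammingNorm_eq_four_of_four_le hv
  have hu : u ⬝ᵥ u = 1 := by
    rw [dotProduct_self_eq_hammingNorm, u_norm]
    decide
  refine ⟨u, hu, u_norm, u_supp, ?_⟩
  rw [reflection_mulVec_of_dotProduct_eq_neg_one hu huv]
  refine Finset.card_lt_card (Finset.ssubset_iff_of_subset ?_ |>.2 ⟨b, ?_, ?_⟩)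
  · intro i
    simp only [Finset.mem_filter_univ]
    contrapose!
    intro hvi
    simp [hvi, u_supp i hvi]
  · simpa using hvb
  · simp [hub]

theorem exists_eq_single_of_hammingNorm_eq_one {v : ι → ZMod 3} (hv : hammingNorm v = 1) :
    ∃ a c, c ≠ 0 ∧ v = Pi.single a c := by
  obtain ⟨a, ha⟩ := Finset.card_eq_one.1 hv
  have v_ne_iff (i : ι) : v i ≠ 0 ↔ i = a := by simpa using Finset.ext_iff.1 ha i
  refine ⟨a, v a, (v_ne_iff a).2 rfl, funext fun i => ?_⟩
  by_cases hi : i = a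
  · simp [hi]
  · simpa [hi] using mt (v_ne_iff i).1 hi

theorem exists_signedPerm_mulVec_eq {u v : ι → ZMod 3} (huv : hammingNorm u = hammingNorm v) :
    ∃ σ d hd, (signedPerm σ d hd).1 *ᵥ u = v := by
  obtain ⟨σ, hσ⟩ := Equiv.Perm.exists_map_finset_eq _ _ huv
  have ne_zero_iff (i : ι) : u i ≠ 0 ↔ v (σ i) ≠ 0 := by
    simpa using Finset.ext_iff.1 hσ (σ i)
  have exists_sign (a b : ZMod 3) : (a ≠ 0 ↔ b ≠ 0) → ∃ c, c * c = 1 ∧ c * a = b := by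
    decide +revert
  choose d hd hdu using fun i => exists_sign _ _ (ne_zero_iff i)
  refine ⟨σ, d, hd, funext fun i => ?_⟩
  obtain ⟨i, rfl⟩ := σ.surjective i
  rw [signedPerm_mulVec_apply, hdu]

variable {G : Subgroup (orthogonalGroup ι (ZMod 3))} (hG : ∀ σ d hd, signedPerm σ d hd ∈ G)
include hG

theorem exists_mem_mulVec_single_eq_single {a : ι} {c : ZMod 3} (hc : c ≠ 0) (k : ι) :
    ∃ g ∈ G, g.1 *ᵥ Pi.single a c = Pi.single k 1 ∧
      ∀ j ≠ k, j ≠ a → g.1 *ᵥ Pi.single j 1 = Pi.single j 1 := by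
  have hd (i : ι) : (if i = a then c else 1) * (if i = a then c else 1) = 1 := by
    split_ifs
    · exact mul_self_eq_one_iff_ne_zero.2 hc
    · exact one_mul 1
  refine ⟨_, hG (Equiv.swap a k) _ hd, ?_, fun j hjk hja => ?_⟩
  · simp only [signedPerm_mulVec_single, Equiv.swap_apply_left, if_true,
      mul_self_eq_one_iff_ne_zero.2 hc]
  · simp only [signedPerm_mulVec_single, Equiv.swap_apply_of_ne_of_ne hja hjk, if_neg hja, one_mul]

theorem reflection_mem_of_hammingNorm_eq {u v : ι → ZMod 3} (hu : u ⬝ᵥ u = 1) (hv : v ⬝ᵥ v = 1)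
    (huv : hammingNorm u = hammingNorm v) (huG : reflection u hu ∈ G) : reflection v hv ∈ G := by
  obtain ⟨σ, d, hd, rfl⟩ := exists_signedPerm_mulVec_eq huv
  rw [reflection_mulVec_eq_conj _ hu]
  exact G.mul_mem (G.mul_mem (hG σ d hd) huG) (G.inv_mem (hG σ d hd))

variable (hR : ∀ u hu, hammingNorm u = 4 → reflection u hu ∈ G)
include hR

theorem exists_mem_mulVec_eq_single (v : ι → ZMod 3) (hv : v ⬝ᵥ v = 1) (k : ι) :
    ∃ g ∈ G, g.1 *ᵥ v = Pi.single k 1 ∧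
      ∀ j ≠ k, v j = 0 → g.1 *ᵥ Pi.single j 1 = Pi.single j 1 := by
  induction hw : hammingNorm v using Nat.strong_induction_on generalizing v with
  | _ w ih =>
    subst hw
    obtain v_norm | v_norm := hammingNorm_eq_one_or_four_le hv
    · obtain ⟨a, c, hc, rfl⟩ := exists_eq_single_of_hammingNorm_eq_one v_norm
      obtain ⟨g, hg, hga, hgj⟩ := exists_mem_mulVec_single_eq_single hG hc k
      refine ⟨g, hg, hga, fun j hjk hj => hgj j hjk ?_⟩
      rintro rfl
      exact hc (by simpa using hj)
    · obtain ⟨u, hu, u_norm, u_supp, v_lt⟩ := exists_reflection_hammingNorm_mulVec_lt v_norm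
      obtain ⟨g, hg, hgv, hgj⟩ := ih _ v_lt _ ((dotProduct_mulVec_mulVec _ v v).trans hv) rfl
      refine ⟨g * reflection u hu, G.mul_mem hg (hR u hu u_norm), ?_, fun j hjk hj => ?_⟩
      · rw [UnitaryGroup.mul_val, ← mulVec_mulVec, hgv]
      · have refl_fix : (reflection u hu).1 *ᵥ Pi.single j 1 = Pi.single j 1 :=
          reflection_mulVec_of_dotProduct_eq_zero hu (by simp [u_supp j hj])
        have refl_apply : ((reflection u hu).1 *ᵥ v) j = 0 := by
          simp [reflection_mulVec, hj, u_supp j hj]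
        rw [UnitaryGroup.mul_val, ← mulVec_mulVec, refl_fix, hgj j hjk refl_apply]

theorem subgroup_eq_top_of_signedPerm_mem_of_reflection_mem : G = ⊤ :=
  subgroup_eq_top_of_forall_unit_vector G (exists_mem_mulVec_eq_single hG hR)

end ZModThree

section DiagH4

theorem swap_castAdd {k : ℕ} (n : ℕ) (a b j : Fin k) :
    Equiv.swap (Fin.castAdd n a) (Fin.castAdd n b) (Fin.castAdd n j) =
      Fin.castAdd n (Equiv.swap a b j) :=
  (Fin.castAdd_injective k n).swap_apply a b j

theorem swap_natAdd {k n : ℕ} (a b : Fin k) (j : Fin n) :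
    Equiv.swap (Fin.castAdd n a) (Fin.castAdd n b) (Fin.natAdd k j) = Fin.natAdd k j := by
  have natAdd_ne_castAdd (c : Fin k) : Fin.natAdd k j ≠ Fin.castAdd n c :=
    Fin.ne_of_val_ne (by simp only [Fin.val_natAdd, Fin.val_castAdd]; lia)
  exact Equiv.swap_apply_of_ne_of_ne (natAdd_ne_castAdd a) (natAdd_ne_castAdd b)

variable (n : ℕ)

/-- The vector `(-1, 1, 1, 1, 0, …, 0)`, fixed by `diag(H_4, I)`. -/
def diagH4Root : Fin (4 + n) → ZMod 3 :=
  Fin.append ![-1, 1, 1, 1] 0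

theorem hammingNorm_diagH4Root : hammingNorm (diagH4Root n) = 4 := by
  have root_ne_zero : ∀ i : Fin 4, (![-1, 1, 1, 1] : Fin 4 → ZMod 3) i ≠ 0 := by decide
  rw [hammingNorm, Finset.card_filter, Fin.sum_univ_add]
  simp [diagH4Root, root_ne_zero]

theorem diagH4Root_dotProduct_self : diagH4Root n ⬝ᵥ diagH4Root n = 1 := by
  rw [dotProduct_self_eq_hammingNorm, hammingNorm_diagH4Root]
  decide

/-- The signs `(-1, -1, -1, -1, 1, …, 1)` of the monomial factor of `diag(H_4, I)`. -/
def diagH4Sign : Fin (4 + n) → ZMod 3 :=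
  Fin.append (-1) 1

theorem diagH4Sign_mul_self (i : Fin (4 + n)) : diagH4Sign n i * diagH4Sign n i = 1 := by
  refine Fin.addCases (fun i => ?_) (fun i => ?_) i <;> simp [diagH4Sign]

/-- The monomial matrix `P` with `diag(H_4, I) = P s`, for `s` the reflection in `diagH4Root`. -/
def diagH4SignedPerm : orthogonalGroup (Fin (4 + n)) (ZMod 3) :=
  signedPerm (Equiv.swap (Fin.castAdd n 1) (Fin.castAdd n 2)) (diagH4Sign n) (diagH4Sign_mul_self n)

theorem diagH4SignedPerm_mulVec_diagH4Root :
    (diagH4SignedPerm n).1 *ᵥ diagH4Root n = -diagH4Root n := by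
  have root_swap (i : Fin 4) :
      (![-1, 1, 1, 1] : Fin 4 → ZMod 3) (Equiv.swap 1 2 i) = ![-1, 1, 1, 1] i := by
    decide +revert
  ext i
  obtain ⟨i, rfl⟩ := (Equiv.swap (Fin.castAdd n (1 : Fin 4)) (Fin.castAdd n 2)).surjective i
  rw [diagH4SignedPerm, signedPerm_mulVec_apply]
  cases i using Fin.addCases with
  | left i => simp [diagH4Root, diagH4Sign, swap_castAdd, root_swap]
  | right i => simp [diagH4Root, diagH4Sign, swap_natAdd]

theorem H4_apply (i j : Fin 4) :
    H4 i j = (if i = Equiv.swap 1 2 j then -1 else 0) -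
      (![-1, 1, 1, 1] : Fin 4 → ZMod 3) i * (![-1, 1, 1, 1] : Fin 4 → ZMod 3) j := by
  fin_cases i <;> fin_cases j <;> decide

theorem diagH4SignedPerm_apply (i j : Fin (4 + n)) :
    (diagH4SignedPerm n).1 i j =
      if i = Equiv.swap (Fin.castAdd n 1) (Fin.castAdd n 2) j then diagH4Sign n j else 0 :=
  rfl

theorem diagH4_eq_sub_vecMulVec :
    diagH4 (4 + n) = (diagH4SignedPerm n).1 - vecMulVec (diagH4Root n) (diagH4Root n) := by
  ext i j
  rw [Matrix.sub_apply, vecMulVec_apply, diagH4SignedPerm_apply]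
  have val_ne (k : Fin 4) (l : Fin n) : (k : ℕ) ≠ 4 + l := by lia
  cases i using Fin.addCases with
  | left i =>
    cases j using Fin.addCases with
    | left j => simp [diagH4, diagH4Root, diagH4Sign, swap_castAdd, H4_apply]
    | right j => simp [diagH4, diagH4Root, swap_natAdd, Fin.ext_iff, val_ne]
  | right i =>
    cases j using Fin.addCases with
    | left j => simp [diagH4, diagH4Root, swap_castAdd, Fin.ext_iff, (val_ne _ i).symm]
    | right j => simp [diagH4, diagH4Root, diagH4Sign, swap_natAdd, Fin.ext_iff]

theorem diagH4_eq_mul_reflection :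
    diagH4 (4 + n) =
      (diagH4SignedPerm n * reflection (diagH4Root n) (diagH4Root_dotProduct_self n)).1 := by
  rw [diagH4_eq_sub_vecMulVec, UnitaryGroup.mul_val, coe_reflection, mul_sub, mul_one,
    mul_smul_comm, mul_vecMulVec, diagH4SignedPerm_mulVec_diagH4Root, neg_vecMulVec, smul_neg,
    ← neg_smul, show (-2 : ZMod 3) = 1 by decide, one_smul]

theorem subgroup_eq_top_of_signedPerm_mem_of_diagH4_mem
    {G : Subgroup (orthogonalGroup (Fin (4 + n)) (ZMod 3))}
    (hG : ∀ σ d hd, signedPerm σ d hd ∈ G)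
    (hH : ∀ A : orthogonalGroup (Fin (4 + n)) (ZMod 3), A.1 = diagH4 (4 + n) → A ∈ G) :
    G = ⊤ := by
  have root_mem : reflection (diagH4Root n) (diagH4Root_dotProduct_self n) ∈ G :=
    (G.mul_mem_cancel_left (hG _ _ _)).1 (hH _ (diagH4_eq_mul_reflection n).symm)
  exact subgroup_eq_top_of_signedPerm_mem_of_reflection_mem hG fun u hu u_norm =>
    reflection_mem_of_hammingNorm_eq hG (diagH4Root_dotProduct_self n) hu
      (by rw [hammingNorm_diagH4Root, u_norm]) root_mem

end DiagH4

section GeneralLinear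

variable {m : ℕ}

theorem isMonomial_iff_exists_signedPerm {A : Matrix (Fin m) (Fin m) (ZMod 3)} :
    IsMonomial A ↔ ∃ σ d hd, (signedPerm σ d hd).1 = A := by
  simp only [IsMonomial, ← mul_self_eq_one_iff_ne_zero, ← Matrix.ext_iff, coe_signedPerm_apply,
    exists_prop, eq_comm]

theorem mem_OGL_iff {A : GL (Fin m) (ZMod 3)} :
    A ∈ OGL m ↔ A.1 ∈ orthogonalGroup (Fin m) (ZMod 3) :=
  (mem_orthogonalGroup_iff' (Fin m) (ZMod 3)).symm

theorem closure_eq_OGL {S : Set (GL (Fin m) (ZMod 3))} (hS : S ⊆ OGL m)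
    (hgen : Subgroup.closure {A : orthogonalGroup (Fin m) (ZMod 3) | Unitary.toUnits A ∈ S} = ⊤) :
    Subgroup.closure S = OGL m := by
  refine le_antisymm ((Subgroup.closure_le _).2 hS) fun A hA => ?_
  have mem_map : A ∈ (⊤ : Subgroup (orthogonalGroup (Fin m) (ZMod 3))).map Unitary.toUnits :=
    ⟨⟨A.1, mem_OGL_iff.1 hA⟩, trivial, Units.ext rfl⟩
  rw [← hgen, MonoidHom.map_closure] at mem_map
  exact Subgroup.closure_mono (Set.image_preimage_subset _ S) mem_map

theorem mem_OGL_of_isMonomial {A : GL (Fin m) (ZMod 3)} (hA : IsMonomial A.1) : A ∈ OGL m := by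
  obtain ⟨σ, d, hd, h⟩ := isMonomial_iff_exists_signedPerm.1 hA
  exact mem_OGL_iff.2 (h ▸ (signedPerm σ d hd).2)

theorem mem_OGL_of_eq_diagH4 {n : ℕ} {A : GL (Fin (4 + n)) (ZMod 3)} (hA : A.1 = diagH4 (4 + n)) :
    A ∈ OGL (4 + n) :=
  mem_OGL_iff.2 (hA.trans (diagH4_eq_mul_reflection n) ▸ Subtype.property _)

end GeneralLinear

end OrthogonalGeneration

/-- For `m ≤ 3`, the orthogonal group `O(m, 3)` is generated by the
invertible monomial matrices; for `m ≥ 4` it is generated by the invertible monomial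
matrices together with `diag(H_4, I_{m−4})`, where `H_4 = H_2 ⊗ H_2`. -/
theorem statement18 (m : ℕ) :
    (m ≤ 3 →
      Subgroup.closure
        {A : GL (Fin m) (ZMod 3) | IsMonomial (A : Matrix (Fin m) (Fin m) (ZMod 3))} = OGL m) ∧
    (4 ≤ m →
      Subgroup.closure
        ({A : GL (Fin m) (ZMod 3) | IsMonomial (A : Matrix (Fin m) (Fin m) (ZMod 3))} ∪
          {A : GL (Fin m) (ZMod 3) | (A : Matrix (Fin m) (Fin m) (ZMod 3)) = diagH4 m}) =
        OGL m) := by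
  open OrthogonalGeneration in
  refine ⟨fun hm => ?_, fun hm => ?_⟩
  · refine closure_eq_OGL (fun A => mem_OGL_of_isMonomial)
      (subgroup_eq_top_of_signedPerm_mem_of_reflection_mem (fun σ d hd => ?_) fun u hu u_norm => ?_)
    · exact Subgroup.subset_closure (isMonomial_iff_exists_signedPerm.2 ⟨σ, d, hd, rfl⟩)
    · have := hammingNorm_le_card_fintype (x := u)
      rw [u_norm, Fintype.card_fin] at this
      lia
  · obtain ⟨n, rfl⟩ := Nat.exists_eq_add_of_le hm
    refine closure_eq_OGL (Set.union_subset (fun A => mem_OGL_of_isMonomial)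
      fun A => mem_OGL_of_eq_diagH4) ?_
    refine subgroup_eq_top_of_signedPerm_mem_of_diagH4_mem n (fun σ d hd => ?_) fun A hA => ?_
    · exact Subgroup.subset_closure (.inl (isMonomial_iff_exists_signedPerm.2 ⟨σ, d, hd, rfl⟩))
    · exact Subgroup.subset_closure (.inr hA)
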